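/- There exists an optimal solution of the vertex-cover LP that is half-integral; that is, there is a feasible assignment x with x_v ∈ {0, 1/2, 1} for every v ∈ V whose value equals the minimum value over all feasible assignments. -/

import Mathlib

/-!
Truncating a fractional cover at `1` costs nothing, and every fractional cover `y ≤ 1` is a convex
combination of half-integral ones, so the minimum of a linear functional is attained at one of the
finitely many half-integral covers.

For the decomposition, round every entry of `y` in `(0, 1)` to `1/2`. Subtracting the multiple
`2m` of this rounding and rescaling by `1 / (1 - 2m)` sends such an entry `t` to
`(t - m) / (1 - 2m)`, and fixes the entries `0` and `1`. If `m` is the least distance to `{0, 1}`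
among the entries outside `{0, 1/2, 1}`, the result is again a fractional cover, and it has
strictly fewer such entries.
-/

open Set

section

variable {V K : Type*} [Field K] [LinearOrder K]

variable (K) in
/-- The feasible region of the vertex-cover LP. The edges are given by an arbitrary relation `r`,
so loops and one-way edges are allowed. -/
def fractionalCovers (r : V → V → Prop) : Set (V → K) :=
  {x | (∀ v, 0 ≤ x v) ∧ ∀ u v, r u v → 1 ≤ x u + x v}

/-- The vertices at which `x` fails to be half-integral; `x` is half-integral when this set is
empty. -/
def nonHalfIntegralSupport (x : V → K) : Set V :=
  {v | x v ∉ ({0, 1 / 2, 1} : Set K)}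

variable (K) in
/-- The half-integral points of the feasible region of the vertex-cover LP. -/
def halfIntegralCovers (r : V → V → Prop) : Set (V → K) :=
  {x ∈ fractionalCovers K r | ∀ v, x v ∈ ({0, 1 / 2, 1} : Set K)}

/-- The rounding of a `[0, 1]`-valued assignment that keeps the entries `0` and `1` and replaces
all others by `1/2`. -/
def halfRound (y : V → K) (v : V) : K :=
  if y v = 0 then 0 else if y v = 1 then 1 else 1 / 2

/-- What is left of `y` after splitting off its rounding with coefficient `2m`, rescaled so that
`y` is the convex combination of the two with coefficients `2m` and `1 - 2m`. -/
def roundingResidual (m : K) (y : V → K) (v : V) : K :=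
  (y v - 2 * m * halfRound y v) / (1 - 2 * m)

variable {r : V → V → Prop} {y : V → K} {m : K} {v : V}

theorem halfRound_of_eq_one (hv : y v = 1) : halfRound y v = 1 := by
  simp [halfRound, hv]

theorem halfRound_of_mem_Ioo (hv : y v ∈ Ioo 0 1) : halfRound y v = 1 / 2 := by
  rw [halfRound, if_neg hv.1.ne', if_neg hv.2.ne]

theorem roundingResidual_of_eq_zero (hv : y v = 0) : roundingResidual m y v = 0 := by
  simp [roundingResidual, halfRound, hv]

theorem roundingResidual_of_eq_one (hm : 2 * m ≠ 1) (hv : y v = 1) :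
    roundingResidual m y v = 1 := by
  rw [roundingResidual, halfRound_of_eq_one hv, hv, mul_one, div_self (sub_ne_zero.2 hm.symm)]

theorem smul_halfRound_add_smul_roundingResidual (hm : 2 * m ≠ 1) (y : V → K) :
    (2 * m) • halfRound y + (1 - 2 * m) • roundingResidual m y = y := by
  ext v
  have h_ne : 1 - 2 * m ≠ 0 := sub_ne_zero.2 hm.symm
  simp only [Pi.add_apply, Pi.smul_apply, smul_eq_mul, roundingResidual, mul_div_cancel₀ _ h_ne,
    add_sub_cancel]

theorem mem_Ioo_of_mem_nonHalfIntegralSupport (hyv : y v ∈ Icc 0 1)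
    (hv : v ∈ nonHalfIntegralSupport y) : y v ∈ Ioo 0 1 := by
  rcases eq_endpoints_or_mem_Ioo_of_mem_Icc hyv with h | h | h
  · exact absurd (.inl h) hv
  · exact absurd (.inr (.inr h)) hv
  · exact h

theorem finite_halfIntegralCovers [Finite V] : (halfIntegralCovers K r).Finite :=
  (Finite.pi' fun _ : V => toFinite ({0, 1 / 2, 1} : Set K)).subset fun _ hx => hx.2

variable [IsStrictOrderedRing K]

theorem one_mem_halfIntegralCovers : 1 ∈ halfIntegralCovers K r :=
  ⟨⟨fun _ => zero_le_one, fun _ _ _ => by norm_num⟩, fun _ => by simp⟩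

theorem inf_one_mem_fractionalCovers (hy : y ∈ fractionalCovers K r) :
    y ⊓ 1 ∈ fractionalCovers K r := by
  refine ⟨fun v => le_min (hy.1 v) zero_le_one, fun u v huv => ?_⟩
  have := hy.1 u
  have := hy.1 v
  have := hy.2 u v huv
  simp only [Pi.inf_apply, Pi.one_apply]
  grind

theorem eq_one_or_eq_one_or_mem_Ioo_of_edge (hy : y ∈ fractionalCovers K r) (hy_le : y ≤ 1)
    {u v : V} (huv : r u v) : y u = 1 ∨ y v = 1 ∨ (y u ∈ Ioo 0 1 ∧ y v ∈ Ioo 0 1) := by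
  have h_edge := hy.2 u v huv
  rcases (hy_le u).eq_or_lt with hu | hu
  · exact .inl hu
  rcases (hy_le v).eq_or_lt with hv | hv
  · exact .inr (.inl hv)
  simp only [Pi.one_apply] at hu hv
  exact .inr (.inr ⟨⟨by linarith, hu⟩, ⟨by linarith, hv⟩⟩)

theorem halfRound_mem_halfIntegralCovers (hy : y ∈ fractionalCovers K r) (hy_le : y ≤ 1) :
    halfRound y ∈ halfIntegralCovers K r := by
  have h_values (v : V) : halfRound y v ∈ ({0, 1 / 2, 1} : Set K) := by
    unfold halfRound
    split_ifs <;> simp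
  have h_nonneg (v : V) : 0 ≤ halfRound y v := by
    rcases h_values v with h | h | h <;> rw [h] <;> norm_num
  refine ⟨⟨h_nonneg, fun u v huv => ?_⟩, h_values⟩
  rcases eq_one_or_eq_one_or_mem_Ioo_of_edge hy hy_le huv with hu | hv | ⟨hu, hv⟩
  · rw [halfRound_of_eq_one hu]
    exact le_add_of_nonneg_right (h_nonneg v)
  · rw [halfRound_of_eq_one hv]
    exact le_add_of_nonneg_left (h_nonneg u)
  · rw [halfRound_of_mem_Ioo hu, halfRound_of_mem_Ioo hv, add_halves]

theorem roundingResidual_of_mem_Ioo (hv : y v ∈ Ioo 0 1) :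
    roundingResidual m y v = (y v - m) / (1 - 2 * m) := by
  rw [roundingResidual, halfRound_of_mem_Ioo hv]
  ring

theorem roundingResidual_mem_Icc (hyv : y v ∈ Icc 0 1) (hm : 2 * m < 1)
    (h_margin : y v ∈ Ioo 0 1 → y v ∈ Icc m (1 - m)) :
    roundingResidual m y v ∈ Icc 0 1 := by
  rcases eq_endpoints_or_mem_Ioo_of_mem_Icc hyv with h | h | h
  · simp [roundingResidual_of_eq_zero h]
  · simp [roundingResidual_of_eq_one hm.ne h]
  · have h_pos : 0 < 1 - 2 * m := sub_pos.2 hm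
    obtain ⟨h_ge, h_le⟩ := h_margin h
    rw [roundingResidual_of_mem_Ioo h, mem_Icc, le_div_iff₀ h_pos, div_le_iff₀ h_pos]
    constructor <;> linarith

theorem roundingResidual_mem_fractionalCovers (hy : y ∈ fractionalCovers K r) (hy_le : y ≤ 1)
    (hm : 2 * m < 1) (h_margin : ∀ v, y v ∈ Ioo 0 1 → y v ∈ Icc m (1 - m)) :
    roundingResidual m y ∈ fractionalCovers K r := by
  have h_nonneg (v : V) : 0 ≤ roundingResidual m y v :=
    (roundingResidual_mem_Icc ⟨hy.1 v, hy_le v⟩ hm (h_margin v)).1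
  refine ⟨h_nonneg, fun u v huv => ?_⟩
  rcases eq_one_or_eq_one_or_mem_Ioo_of_edge hy hy_le huv with hu | hv | ⟨hu, hv⟩
  · rw [roundingResidual_of_eq_one hm.ne hu]
    exact le_add_of_nonneg_right (h_nonneg v)
  · rw [roundingResidual_of_eq_one hm.ne hv]
    exact le_add_of_nonneg_left (h_nonneg u)
  · have h_edge := hy.2 u v huv
    rw [roundingResidual_of_mem_Ioo hu, roundingResidual_of_mem_Ioo hv, ← add_div,
      le_div_iff₀ (sub_pos.2 hm)]
    linarith

theorem nonHalfIntegralSupport_roundingResidual_subset (hm : 2 * m ≠ 1) :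
    nonHalfIntegralSupport (roundingResidual m y) ⊆ nonHalfIntegralSupport y := by
  refine fun v hv h_mem => hv ?_
  rcases h_mem with h | h | h
  · exact Or.inl (roundingResidual_of_eq_zero h)
  · have h_Ioo : y v ∈ Ioo 0 1 := by rw [h]; constructor <;> norm_num
    refine Or.inr (.inl ?_)
    rw [roundingResidual_of_mem_Ioo h_Ioo, h, div_eq_iff (sub_ne_zero.2 hm.symm)]
    ring
  · exact Or.inr (.inr (roundingResidual_of_eq_one hm h))

theorem notMem_nonHalfIntegralSupport_roundingResidual (hm : 2 * m ≠ 1) (hv : y v ∈ Ioo 0 1)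
    (h_tight : y v = m ∨ y v = 1 - m) : v ∉ nonHalfIntegralSupport (roundingResidual m y) := by
  refine not_not_intro ?_
  rw [roundingResidual_of_mem_Ioo hv]
  rcases h_tight with h | h
  · simp [h]
  · refine .inr (.inr ((div_eq_one_iff_eq (sub_ne_zero.2 hm.symm)).2 ?_))
    rw [h]
    ring

theorem exists_tight_margin [Finite V] (hy : ∀ v, y v ∈ Icc 0 1)
    (h_supp : (nonHalfIntegralSupport y).Nonempty) :
    ∃ m : K, 0 ≤ m ∧ 2 * m < 1 ∧ (∀ v, y v ∈ Ioo 0 1 → y v ∈ Icc m (1 - m)) ∧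
      ∃ v ∈ nonHalfIntegralSupport y, y v = m ∨ y v = 1 - m := by
  obtain ⟨v₀, hv₀, h_min⟩ :=
    exists_min_image _ (fun v => min (y v) (1 - y v)) (toFinite _) h_supp
  obtain ⟨h_pos, h_lt⟩ := mem_Ioo_of_mem_nonHalfIntegralSupport (hy v₀) hv₀
  have h_ne : y v₀ ≠ 1 / 2 := fun h => hv₀ (.inr (.inl h))
  have hm : 2 * min (y v₀) (1 - y v₀) < 1 := by grind
  refine ⟨min (y v₀) (1 - y v₀), le_min h_pos.le (sub_nonneg.2 h_lt.le), hm, fun v hv => ?_,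
    v₀, hv₀, by grind⟩
  by_cases hv_supp : v ∈ nonHalfIntegralSupport y
  · have ⟨h_left, h_right⟩ := le_min_iff.1 (h_min v hv_supp)
    exact ⟨h_left, le_sub_comm.1 h_right⟩
  · have hv_half : y v = 1 / 2 := by
      rcases not_not.1 hv_supp with h | h | h
      · exact absurd h hv.1.ne'
      · exact h
      · exact absurd h hv.2.ne
    rw [hv_half]
    constructor <;> linarith

theorem mem_convexHull_halfIntegralCovers [Finite V] (hy : y ∈ fractionalCovers K r)
    (hy_le : y ≤ 1) : y ∈ convexHull K (halfIntegralCovers K r) := by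
  induction h_eq : nonHalfIntegralSupport y using WellFoundedLT.induction generalizing y with
  | ind S ih =>
    subst h_eq
    rcases (nonHalfIntegralSupport y).eq_empty_or_nonempty with h_empty | h_supp
    · exact subset_convexHull K _ ⟨hy, fun v => not_not.1 (eq_empty_iff_forall_notMem.1 h_empty v)⟩
    have hy_Icc (v : V) : y v ∈ Icc 0 1 := ⟨hy.1 v, hy_le v⟩
    obtain ⟨m, hm_nonneg, hm, h_margin, v, hv, h_tight⟩ := exists_tight_margin hy_Icc h_supp
    have h_ssubset : nonHalfIntegralSupport (roundingResidual m y) ⊂ nonHalfIntegralSupport y :=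
      (ssubset_iff_of_subset (nonHalfIntegralSupport_roundingResidual_subset hm.ne)).2 ⟨v, hv,
        notMem_nonHalfIntegralSupport_roundingResidual hm.ne
          (mem_Ioo_of_mem_nonHalfIntegralSupport (hy_Icc v) hv) h_tight⟩
    have h_residual : roundingResidual m y ∈ convexHull K (halfIntegralCovers K r) :=
      ih _ h_ssubset (roundingResidual_mem_fractionalCovers hy hy_le hm h_margin)
        (fun v => (roundingResidual_mem_Icc (hy_Icc v) hm (h_margin v)).2) rfl
    have h_round : halfRound y ∈ convexHull K (halfIntegralCovers K r) :=
      subset_convexHull K _ (halfRound_mem_halfIntegralCovers hy hy_le)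
    rw [← smul_halfRound_add_smul_roundingResidual hm.ne y]
    exact convex_convexHull K _ h_round h_residual (by linarith) (by linarith) (by ring)

theorem exists_halfIntegralCover_dotProduct_le [Fintype V] {w : V → K} (hw : 0 ≤ w)
    (hy : y ∈ fractionalCovers K r) : ∃ z ∈ halfIntegralCovers K r, w ⬝ᵥ z ≤ w ⬝ᵥ y := by
  have h_hull : y ⊓ 1 ∈ convexHull K (halfIntegralCovers K r) :=
    mem_convexHull_halfIntegralCovers (inf_one_mem_fractionalCovers hy) inf_le_right
  have h_concave : ConcaveOn K univ (dotProductBilin K K w) :=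
    (dotProductBilin K K w).concaveOn convex_univ
  obtain ⟨z, hz, hz_le⟩ := h_concave.exists_le_of_mem_convexHull (subset_univ _) h_hull
  exact ⟨z, hz, hz_le.trans (dotProduct_le_dotProduct_of_nonneg_left inf_le_left hw)⟩

theorem exists_halfIntegral_optimal_LPVC_general [Fintype V] (r : V → V → Prop) (w : V → K)
    (hw : 0 ≤ w) :
    ∃ x ∈ halfIntegralCovers K r, ∀ y ∈ fractionalCovers K r, w ⬝ᵥ x ≤ w ⬝ᵥ y := by
  obtain ⟨x, hx, h_min⟩ := exists_min_image (halfIntegralCovers K r) (w ⬝ᵥ ·)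
    finite_halfIntegralCovers ⟨1, one_mem_halfIntegralCovers⟩
  refine ⟨x, hx, fun y hy => ?_⟩
  obtain ⟨z, hz, hz_le⟩ := exists_halfIntegralCover_dotProduct_le hw hy
  exact (h_min z hz).trans hz_le

end

/-- There exists an optimal solution of the vertex-cover LP that is
half-integral. -/
theorem exists_halfIntegral_optimal_LPVC {V : Type*} [Fintype V]
    (G : SimpleGraph V) (w : V → ℝ) (hw : ∀ v, 0 < w v) :
    ∃ x : V → ℝ,
      (∀ v, 0 ≤ x v) ∧
      (∀ u v, G.Adj u v → 1 ≤ x u + x v) ∧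
      (∀ v, x v = 0 ∨ x v = 1/2 ∨ x v = 1) ∧
      (∀ y : V → ℝ, (∀ v, 0 ≤ y v) → (∀ u v, G.Adj u v → 1 ≤ y u + y v) →
        ∑ v, w v * x v ≤ ∑ v, w v * y v) := by
  obtain ⟨x, ⟨⟨h_nonneg, h_edge⟩, h_half⟩, h_min⟩ :=
    exists_halfIntegral_optimal_LPVC_general G.Adj w fun v => (hw v).le
  exact ⟨x, h_nonneg, h_edge, h_half, fun y hy hy_edge => h_min y ⟨hy, hy_edge⟩⟩
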